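/- arXiv:2408.12962 — 2 statements merged into one kernel-verified Lean document; each statement's English description precedes it below -/
import Mathlib

section
/- Let P, Q, R be probability mass functions on a finite set S such that P is absolutely continuous with respect to Q and Q is absolutely continuous with respect to R, and let M = max_{s : Q(s)>0} |log(Q(s)/R(s))|. Then | D(P‖R) − D(Q‖R) | ≤ D(P‖Q) + M·√(2·D(P‖Q)). (The proof combines the decomposition D(P‖R) = D(P‖Q) + D(Q‖R) + Σ_s (P(s)−Q(s))·log(Q(s)/R(s)) with Pinsker's inequality bounding the total variation distance between P and Q by √(D(P‖Q)/2).) -/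
open scoped BigOperators Classical

namespace CovertPinsker

/-- Kullback–Leibler divergence (natural logarithm) between two functions on a
finite type, with the convention `0 · log 0 = 0`. -/
noncomputable def klDiv {α : Type*} [Fintype α] (p q : α → ℝ) : ℝ :=
  ∑ a, p a * Real.log (p a / q a)

theorem log_lower {t : ℝ} (ht : 0 < t) :
    (t - 1) * (5 * t + 1) / (2 * t * (t + 2)) ≤ Real.log t := by
  let f : ℝ → ℝ := fun x => Real.log x - (x - 1) * (5 * x + 1) / (2 * x * (x + 2))
  have hd : ∀ x : ℝ, 0 < x → HasDerivAt f ((x - 1) ^ 3 / (x ^ 2 * (x + 2) ^ 2)) x := by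
    intro x hx
    have h1 : HasDerivAt (fun x : ℝ => (x - 1) * (5 * x + 1))
        (1 * (5 * x + 1) + (x - 1) * (5 * 1)) x :=
      ((hasDerivAt_id' x).sub_const 1).mul (((hasDerivAt_id' x).const_mul 5).add_const 1)
    have h2 : HasDerivAt (fun x : ℝ => 2 * x * (x + 2))
        ((2 * 1) * (x + 2) + (2 * x) * 1) x :=
      ((hasDerivAt_id' x).const_mul 2).mul ((hasDerivAt_id' x).add_const 2)
    have h3 := (Real.hasDerivAt_log hx.ne').sub (h1.div h2 (by positivity))
    refine h3.congr_deriv ?_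
    field_simp
    ring
  have f1 : f 1 = 0 := by simp [f]
  suffices h : f 1 ≤ f t by
    rw [f1] at h
    simp only [f] at h
    linarith
  rcases le_total t 1 with h | h
  · have : AntitoneOn f (Set.Icc t 1) := by
      apply antitoneOn_of_deriv_nonpos (convex_Icc _ _)
      · intro x hx
        exact (hd x (lt_of_lt_of_le ht hx.1)).continuousAt.continuousWithinAt
      · intro x hx
        rw [interior_Icc] at hx
        exact (hd x (ht.trans hx.1)).differentiableAt.differentiableWithinAt
      · intro x hx
        rw [interior_Icc] at hx
        rw [(hd x (ht.trans hx.1)).deriv]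
        apply div_nonpos_of_nonpos_of_nonneg _ (by positivity)
        have : 0 ≤ (1 - x) ^ 3 := pow_nonneg (by linarith [hx.2]) 3
        nlinarith
    exact this ⟨le_refl _, h⟩ ⟨h, le_refl _⟩ h
  · have : MonotoneOn f (Set.Icc 1 t) := by
      apply monotoneOn_of_deriv_nonneg (convex_Icc _ _)
      · intro x hx
        exact (hd x (lt_of_lt_of_le one_pos hx.1)).continuousAt.continuousWithinAt
      · intro x hx
        rw [interior_Icc] at hx
        exact (hd x (one_pos.trans hx.1)).differentiableAt.differentiableWithinAt
      · intro x hx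
        rw [interior_Icc] at hx
        rw [(hd x (one_pos.trans hx.1)).deriv]
        have : 0 ≤ (x - 1) ^ 3 := pow_nonneg (by linarith [hx.1]) 3
        positivity
    exact this ⟨le_refl _, h⟩ ⟨h, le_refl _⟩ h

theorem pointwise {p q : ℝ} (hp : 0 ≤ p) (hq : 0 ≤ q) (hpq : q = 0 → p = 0) :
    0 ≤ p * Real.log (p / q) - p + q ∧
    (p - q) ^ 2 ≤ ((2 * p + 4 * q) / 3) * (p * Real.log (p / q) - p + q) := by
  rcases hq.eq_or_lt with h | hq
  · have := hpq h.symm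
    subst this
    simp [← h]
  rcases hp.eq_or_lt with h | hp
  · subst h
    simp
    constructor <;> nlinarith
  have h := log_lower (div_pos hp hq)
  have h2 : 3 * (p - q) ^ 2 / (2 * p + 4 * q) ≤ p * Real.log (p / q) - p + q := by
    have h3 := mul_le_mul_of_nonneg_left h hp.le
    have h4 : p * ((p / q - 1) * (5 * (p / q) + 1) / (2 * (p / q) * (p / q + 2)))
        = 3 * (p - q) ^ 2 / (2 * p + 4 * q) + p - q := by
      field_simp
      ring
    linarith
  refine ⟨le_trans (by positivity) h2, ?_⟩
  rw [div_le_iff₀ (by positivity)] at h2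
  linarith

theorem pinsker {S : Type} [Fintype S] (P Q : S → ℝ)
    (hPnn : ∀ s, 0 ≤ P s) (hP : ∑ s, P s = 1)
    (hQnn : ∀ s, 0 ≤ Q s) (hQ : ∑ s, Q s = 1)
    (hPQ : ∀ s, Q s = 0 → P s = 0) :
    0 ≤ klDiv P Q ∧ (∑ s, |P s - Q s|) ^ 2 ≤ 2 * klDiv P Q := by
  have e : ∑ s, (P s * Real.log (P s / Q s) - P s + Q s) = klDiv P Q := by
    rw [Finset.sum_add_distrib, Finset.sum_sub_distrib, hP, hQ, klDiv]
    ring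
  have e2 : ∑ s, (2 * P s + 4 * Q s) / 3 = 2 := by
    rw [← Finset.sum_div, Finset.sum_add_distrib, ← Finset.mul_sum, ← Finset.mul_sum, hP, hQ]
    norm_num
  have pw := fun s => pointwise (hPnn s) (hQnn s) (hPQ s)
  refine ⟨e ▸ Finset.sum_nonneg fun s _ => (pw s).1, ?_⟩
  rw [← e, ← e2]
  apply Finset.sum_sq_le_sum_mul_sum_of_sq_le_mul
  · intro s _
    have := hPnn s
    have := hQnn s
    positivity
  · intro s _
    exact (pw s).1
  · intro s _
    rw [sq_abs]
    exact (pw s).2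

/-- If `P ≪ Q ≪ R` are pmfs on a finite set and `M` is the maximum of
`|log(Q(s)/R(s))|` over the support of `Q`, then
`|D(P‖R) − D(Q‖R)| ≤ D(P‖Q) + M √(2 D(P‖Q))`. -/
theorem abs_klDiv_sub_klDiv_le (S : Type) [Fintype S]
    (P Q R : S → ℝ)
    (hPnn : ∀ s, 0 ≤ P s) (hP : ∑ s, P s = 1)
    (hQnn : ∀ s, 0 ≤ Q s) (hQ : ∑ s, Q s = 1)
    (hRnn : ∀ s, 0 ≤ R s) (hR : ∑ s, R s = 1)
    (hPQ : ∀ s, Q s = 0 → P s = 0)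
    (hQR : ∀ s, R s = 0 → Q s = 0)
    (M : ℝ)
    (hMub : ∀ s, 0 < Q s → |Real.log (Q s / R s)| ≤ M)
    (hMmem : ∃ s, 0 < Q s ∧ M = |Real.log (Q s / R s)|) :
    |klDiv P R - klDiv Q R| ≤ klDiv P Q + M * Real.sqrt (2 * klDiv P Q) := by
  obtain ⟨hD, hpin⟩ := pinsker P Q hPnn hP hQnn hQ hPQ
  have hM0 : 0 ≤ M := by
    obtain ⟨s, _, h⟩ := hMmem
    rw [h]
    exact abs_nonneg _
  have hdec : klDiv P R - klDiv Q R
      = klDiv P Q + ∑ s, (P s - Q s) * Real.log (Q s / R s) := by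
    simp only [klDiv]
    rw [← Finset.sum_sub_distrib, ← Finset.sum_add_distrib]
    refine Finset.sum_congr rfl fun s _ => ?_
    by_cases hp : P s = 0
    · simp [hp]
    have hq : Q s ≠ 0 := fun h => hp (hPQ s h)
    have hr : R s ≠ 0 := fun h => hq (hQR s h)
    rw [Real.log_div hp hr, Real.log_div hq hr, Real.log_div hp hq]
    ring
  have hsum : |∑ s, (P s - Q s) * Real.log (Q s / R s)| ≤ M * ∑ s, |P s - Q s| := by
    refine (Finset.abs_sum_le_sum_abs _ _).trans ?_
    rw [Finset.mul_sum]
    refine Finset.sum_le_sum fun s _ => ?_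
    rw [abs_mul, mul_comm]
    rcases (hQnn s).eq_or_lt with h | h
    · simp [← h, hPQ s h.symm]
    · exact mul_le_mul_of_nonneg_right (hMub s h) (abs_nonneg _)
  have hs : ∑ s, |P s - Q s| ≤ Real.sqrt (2 * klDiv P Q) := Real.le_sqrt_of_sq_le hpin
  rw [hdec]
  refine (abs_add_le _ _).trans ?_
  rw [abs_of_nonneg hD]
  have := mul_le_mul_of_nonneg_left hs hM0
  linarith

end CovertPinsker
end

section
/- Let 𝒯 = {1,...,6}, let f : 𝒳3 → ℝ be any function, let λ ∈ [0,1], let P_{TX3} and Q_{TX3} be pmfs on 𝒯×𝒳3, and let (ρ_{1,t},ρ_{2,t})_{t∈𝒯} and (ρ'_{1,t},ρ'_{2,t})_{t∈𝒯} be nonnegative tuples such that D_P := E_{P_{TX3}}[F(ρ_{1,T},ρ_{2,T},X3)] > 0 and D_Q := E_{Q_{TX3}}[F(ρ'_{1,T},ρ'_{2,T},X3)] > 0, where F(ρ1,ρ2,x3) = Σ_{z∈𝒵} (ρ1·Γ_{Z|X1X2X3}(z|1,0,x3) + ρ2·Γ_{Z|X1X2X3}(z|0,1,x3) − (ρ1+ρ2)·Γ_{Z|X1X2X3}(z|0,0,x3))²/Γ_{Z|X1X2X3}(z|0,0,x3).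 Set ν = √(D_P/D_Q), define the pmf R on {1,...,12}×𝒳3 by R(t,x3) = λ·P_{TX3}(t,x3) for t ∈ {1,...,6} and R(t,x3) = (1−λ)·Q_{TX3}(t−6,x3) for t ∈ {7,...,12}, and define σ_{ℓ,t} = ρ_{ℓ,t} for t ∈ {1,...,6} and σ_{ℓ,t} = ν·ρ'_{ℓ,t−6} for t ∈ {7,...,12} (ℓ = 1,2). Then E_R[F(σ_{1,T},σ_{2,T},X3)] = D_P, and for each ℓ ∈ {1,2}: λ·E_{P_{TX3}}[ρ_{ℓ,T}·f(X3)]/√(D_P) + (1−λ)·E_{Q_{TX3}}[ρ'_{ℓ,T}·f(X3)]/√(D_Q) = E_R[σ_{ℓ,T}·f(X3)]/√(E_R[F(σ_{1,T},σ_{2,T},X3)]). -/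
open scoped BigOperators Classical

namespace CovertMixing

variable {X3 Z : Type*} [Fintype X3] [Fintype Z]

/-- The unnormalized weighted chi-squared term
`F(ρ1, ρ2, x3) = Σ_z (ρ1 Γ(z|1,0,x3) + ρ2 Γ(z|0,1,x3) − (ρ1+ρ2) Γ(z|0,0,x3))² / Γ(z|0,0,x3)`
(terms with vanishing denominator contribute `0`). -/
noncomputable def F (Γ : Bool → Bool → X3 → Z → ℝ) (x3 : X3) (ρ1 ρ2 : ℝ) : ℝ :=
  ∑ z, (ρ1 * Γ true false x3 z + ρ2 * Γ false true x3 z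
      - (ρ1 + ρ2) * Γ false false x3 z) ^ 2 / Γ false false x3 z

/-- **The mixing identity behind convexity of the rate-key region**: merging
`P` (weight `λ`) with `Q` (weight `1 − λ`) into the pmf `R` on the twelve-point
index set `Fin 6 ⊕ Fin 6`, and rescaling the second family of `ρ`-weights by
`ν = √(D_P / D_Q)`, the merged denominator equals `D_P` and each normalized
mixed expectation combines additively. -/
theorem mixing_identity (X3 Z : Type) [Fintype X3] [Fintype Z]
    (Γ : Bool → Bool → X3 → Z → ℝ)
    (hnn : ∀ x1 x2 x3 z, 0 ≤ Γ x1 x2 x3 z)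
    (hsum : ∀ x1 x2 x3, ∑ z, Γ x1 x2 x3 z = 1)
    (hac1 : ∀ x3 z, Γ false false x3 z = 0 → Γ true false x3 z = 0)
    (hac2 : ∀ x3 z, Γ false false x3 z = 0 → Γ false true x3 z = 0)
    (f : X3 → ℝ) (lam : ℝ) (hlam0 : 0 ≤ lam) (hlam1 : lam ≤ 1)
    (P Q : Fin 6 → X3 → ℝ)
    (hPnn : ∀ t x3, 0 ≤ P t x3) (hP : ∑ t, ∑ x3, P t x3 = 1)
    (hQnn : ∀ t x3, 0 ≤ Q t x3) (hQ : ∑ t, ∑ x3, Q t x3 = 1)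
    (ρ1 ρ2 ρ1' ρ2' : Fin 6 → ℝ)
    (hρ1 : ∀ t, 0 ≤ ρ1 t) (hρ2 : ∀ t, 0 ≤ ρ2 t)
    (hρ1' : ∀ t, 0 ≤ ρ1' t) (hρ2' : ∀ t, 0 ≤ ρ2' t)
    (DP DQ : ℝ)
    (hDPdef : DP = ∑ t, ∑ x3, P t x3 * F Γ x3 (ρ1 t) (ρ2 t))
    (hDQdef : DQ = ∑ t, ∑ x3, Q t x3 * F Γ x3 (ρ1' t) (ρ2' t))
    (hDP : 0 < DP) (hDQ : 0 < DQ)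
    (ν : ℝ) (hν : ν = Real.sqrt (DP / DQ))
    (R : Fin 6 ⊕ Fin 6 → X3 → ℝ)
    (hRl : ∀ (t : Fin 6) (x3 : X3), R (Sum.inl t) x3 = lam * P t x3)
    (hRr : ∀ (t : Fin 6) (x3 : X3), R (Sum.inr t) x3 = (1 - lam) * Q t x3)
    (σ1 σ2 : Fin 6 ⊕ Fin 6 → ℝ)
    (hσ1l : ∀ t : Fin 6, σ1 (Sum.inl t) = ρ1 t)
    (hσ1r : ∀ t : Fin 6, σ1 (Sum.inr t) = ν * ρ1' t)
    (hσ2l : ∀ t : Fin 6, σ2 (Sum.inl t) = ρ2 t)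
    (hσ2r : ∀ t : Fin 6, σ2 (Sum.inr t) = ν * ρ2' t) :
    (∑ s, ∑ x3, R s x3 * F Γ x3 (σ1 s) (σ2 s)) = DP ∧
    (lam * (∑ t, ∑ x3, P t x3 * (ρ1 t * f x3)) / Real.sqrt DP
        + (1 - lam) * (∑ t, ∑ x3, Q t x3 * (ρ1' t * f x3)) / Real.sqrt DQ
      = (∑ s, ∑ x3, R s x3 * (σ1 s * f x3)) /
          Real.sqrt (∑ s, ∑ x3, R s x3 * F Γ x3 (σ1 s) (σ2 s))) ∧
    (lam * (∑ t, ∑ x3, P t x3 * (ρ2 t * f x3)) / Real.sqrt DP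
        + (1 - lam) * (∑ t, ∑ x3, Q t x3 * (ρ2' t * f x3)) / Real.sqrt DQ
      = (∑ s, ∑ x3, R s x3 * (σ2 s * f x3)) /
          Real.sqrt (∑ s, ∑ x3, R s x3 * F Γ x3 (σ1 s) (σ2 s))) := by
  have hFs : ∀ x3 a b, F Γ x3 (ν * a) (ν * b) = ν ^ 2 * F Γ x3 a b := by
    intro x3 a b
    unfold F
    rw [Finset.mul_sum]
    refine Finset.sum_congr rfl fun z _ => ?_
    rw [← mul_div_assoc]
    congr 1
    ring
  have hν2 : ν ^ 2 * DQ = DP := by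
    rw [hν, Real.sq_sqrt (by positivity)]
    field_simp
  have hD : (∑ s, ∑ x3, R s x3 * F Γ x3 (σ1 s) (σ2 s)) = DP := by
    rw [Fintype.sum_sum_type]
    simp only [hRl, hRr, hσ1l, hσ1r, hσ2l, hσ2r, hFs]
    have h1 : (∑ t, ∑ x3, lam * P t x3 * F Γ x3 (ρ1 t) (ρ2 t)) = lam * DP := by
      rw [hDPdef]
      simp only [Finset.mul_sum, mul_assoc]
    have h2 : (∑ t, ∑ x3, (1 - lam) * Q t x3 * (ν ^ 2 * F Γ x3 (ρ1' t) (ρ2' t)))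
        = (1 - lam) * (ν ^ 2 * DQ) := by
      rw [hDQdef]
      simp only [Finset.mul_sum]
      refine Finset.sum_congr rfl fun t _ => Finset.sum_congr rfl fun x _ => ?_
      ring
    rw [h1, h2, hν2]
    ring
  have key : ∀ (σ : Fin 6 ⊕ Fin 6 → ℝ) (ρ ρ' : Fin 6 → ℝ),
      (∀ t, σ (Sum.inl t) = ρ t) → (∀ t, σ (Sum.inr t) = ν * ρ' t) →
      lam * (∑ t, ∑ x3, P t x3 * (ρ t * f x3)) / Real.sqrt DP
        + (1 - lam) * (∑ t, ∑ x3, Q t x3 * (ρ' t * f x3)) / Real.sqrt DQ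
      = (∑ s, ∑ x3, R s x3 * (σ s * f x3)) / Real.sqrt DP := by
    intro σ ρ ρ' hl hr
    rw [Fintype.sum_sum_type]
    simp only [hRl, hRr, hl, hr]
    have h1 : (∑ t, ∑ x3, lam * P t x3 * (ρ t * f x3))
        = lam * (∑ t, ∑ x3, P t x3 * (ρ t * f x3)) := by
      simp only [Finset.mul_sum, mul_assoc]
    have h2 : (∑ t, ∑ x3, (1 - lam) * Q t x3 * (ν * ρ' t * f x3))
        = (1 - lam) * ν * (∑ t, ∑ x3, Q t x3 * (ρ' t * f x3)) := by
      simp only [Finset.mul_sum]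
      refine Finset.sum_congr rfl fun t _ => Finset.sum_congr rfl fun x _ => ?_
      ring
    have hp := Real.sqrt_pos.mpr hDP
    have hq := Real.sqrt_pos.mpr hDQ
    rw [h1, h2, hν, Real.sqrt_div hDP.le]
    field_simp
  rw [hD]
  exact ⟨rfl, key σ1 ρ1 ρ1' hσ1l hσ1r, key σ2 ρ2 ρ2' hσ2l hσ2r⟩

end CovertMixing
end
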